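/- Let $F = (f,g) : \mathbb{C}^2 \to \mathbb{C}^2$ be a polynomial map whose critical curve $C(F)$ is an affine curve of degree $d_1 + d_2 - 2$ (where $\deg f = d_1 \geq d_2 = \deg g$) such that $F$ restricted to $C(F)$ is generically injective, and such that for a generic affine line $L = \{ax+by+c=0\}$, the curve $\{a f + b g + c = 0\}$ (of degree $d_1$) has no common points at infinity with $C(F)$ and meets $C(F)$ transversally in smooth points of $\Delta(F)=F(C(F))$. Then $\deg \Delta(F) = d_1 (d_1 + d_2 - 2)$. -/

import Mathlib

open MvPolynomial

/-!
The curves `{af + bg + c = 0}` and `C(F)` are plane curves of degrees `m = d₁` and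
`n = d₁ + d₂ - 2`, and `F` maps their common points bijectively onto `L ∩ Δ(F)`. So the theorem is
Bézout's theorem for affine curves `P = 0` and `Q = 0` that meet transversally and have no common
points at infinity. By the Jacobian criterion, transversality makes `K[x, y] ⧸ (P, Q)` étale over
`K`, so the number of common points is its dimension. By the Nullstellensatz, the top forms of `P`
and `Q` are coprime, so they have only trivial syzygies; cancelling top forms with these shows that
the Koszul complex of `P` and `Q` stays exact on polynomials of bounded degree, and counting
dimensions there leaves `m * n`.
-/

open Module (finrank finrank_prod finrank_eq_nat_card_basis)

section TopForms

variable {σ R : Type*}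

section CommSemiring

variable [CommSemiring R] {P Q : MvPolynomial σ R} {m n k : ℕ}

theorem totalDegree_le_of_homogeneousComponent_succ_eq_zero (hP : P.totalDegree ≤ k + 1)
    (htop : homogeneousComponent (k + 1) P = 0) : P.totalDegree ≤ k := by
  refine Finset.sup_le fun d hd ↦ Nat.le_of_lt_succ (((le_totalDegree hd).trans hP).lt_of_ne ?_)
  intro (hdeg : d.degree = k + 1)
  have hcoeff := coeff_homogeneousComponent (k + 1) P d
  rw [if_pos hdeg, htop, coeff_zero] at hcoeff
  exact mem_support_iff.1 hd hcoeff.symm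

theorem homogeneousComponent_mul_of_isHomogeneous_right (P : MvPolynomial σ R)
    (hQ : Q.IsHomogeneous n) (k : ℕ) :
    homogeneousComponent (k + n) (P * Q) = homogeneousComponent k P * Q := by
  let := gradedAlgebra (σ := σ) (R := R)
  rw [← decomposition.decompose'_apply, ← decomposition.decompose'_apply]
  exact DirectSum.coe_decompose_mul_add_of_right_mem (homogeneousSubmodule σ R) hQ

theorem homogeneousComponent_add_mul_of_totalDegree_le (hP : P.totalDegree ≤ m)
    (hQ : Q.totalDegree ≤ n) :
    homogeneousComponent (m + n) (P * Q) =
      homogeneousComponent m P * homogeneousComponent n Q := by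
  classical
  ext d
  rw [coeff_homogeneousComponent]
  split_ifs with hd
  · rw [coeff_mul, coeff_mul]
    refine Finset.sum_congr rfl fun ⟨a, b⟩ hab ↦ ?_
    have hdeg : a.degree + b.degree = m + n := by
      rw [← map_add, Finset.HasAntidiagonal.mem_antidiagonal.1 hab, hd]
    rw [coeff_homogeneousComponent, coeff_homogeneousComponent]
    rcases lt_trichotomy a.degree m with ha | ha | ha
    · rw [coeff_eq_zero_of_totalDegree_lt (hQ.trans_lt (show n < b.degree by lia)), ite_self,
        mul_zero, mul_zero]
    · rw [if_pos ha, if_pos (by lia)]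
    · rw [coeff_eq_zero_of_totalDegree_lt (hP.trans_lt ha), ite_self, zero_mul, zero_mul]
  · exact (((homogeneousComponent_isHomogeneous m P).mul
      (homogeneousComponent_isHomogeneous n Q)).coeff_eq_zero hd).symm

end CommSemiring

section IsDomain

variable [CommRing R] [IsDomain R] {P Q D : MvPolynomial σ R} {m n : ℕ}

theorem homogeneousComponent_totalDegree_dvd_homogeneousComponent (hdvd : D ∣ P)
    (hP : P.totalDegree ≤ m) :
    homogeneousComponent D.totalDegree D ∣ homogeneousComponent m P := by
  obtain ⟨E, rfl⟩ := hdvd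
  rcases eq_or_ne (D * E) 0 with h0 | h0
  · simp [h0]
  have hDE := totalDegree_mul_of_isDomain (left_ne_zero_of_mul h0) (right_ne_zero_of_mul h0)
  obtain ⟨k, rfl⟩ := Nat.exists_eq_add_of_le (show D.totalDegree ≤ m by lia)
  rw [homogeneousComponent_add_mul_of_totalDegree_le le_rfl (show E.totalDegree ≤ k by lia)]
  exact dvd_mul_right ..

theorem totalDegree_le_of_totalDegree_mul_le {E : MvPolynomial σ R} {k : ℕ}
    (htop : homogeneousComponent m P ≠ 0) (h : (E * P).totalDegree ≤ k + m) :
    E.totalDegree ≤ k := by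
  rcases eq_or_ne E 0 with rfl | hE
  · simp
  have hP0 : P ≠ 0 := by
    rintro rfl
    simp at htop
  have hm : m ≤ P.totalDegree := not_lt.1 (mt (homogeneousComponent_eq_zero m P) htop)
  rw [totalDegree_mul_of_isDomain hE hP0] at h
  lia

theorem isRelPrime_of_isRelPrime_homogeneousComponent (hP : P.totalDegree ≤ m)
    (hQ : Q.totalDegree ≤ n)
    (hrel : IsRelPrime (homogeneousComponent m P) (homogeneousComponent n Q)) :
    IsRelPrime P Q := by
  intro D hDP hDQ
  have htop : IsUnit (homogeneousComponent D.totalDegree D) :=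
    hrel (homogeneousComponent_totalDegree_dvd_homogeneousComponent hDP hP)
      (homogeneousComponent_totalDegree_dvd_homogeneousComponent hDQ hQ)
  have hdeg : D.totalDegree = 0 := by
    rw [← (homogeneousComponent_isHomogeneous _ D).totalDegree htop.ne_zero]
    exact (isUnit_iff_totalDegree_of_isReduced.1 htop).2
  rwa [hdeg, homogeneousComponent_zero, ← totalDegree_eq_zero_iff_eq_C.1 hdeg] at htop

end IsDomain

end TopForms

section Syzygies

theorem exists_eq_mul_of_mul_add_mul_eq_zero {S : Type*} [CommRing S] [IsDomain S]
    [DecompositionMonoid S] {p q a b : S} (hrel : IsRelPrime p q) (h : a * p + b * q = 0) :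
    ∃ e, a = e * q ∧ b = -(e * p) := by
  rcases eq_or_ne q 0 with rfl | hq
  · have hp : IsUnit p := isRelPrime_zero_right.1 hrel
    obtain ⟨u, rfl⟩ := hp
    refine ⟨-(b * ↑u⁻¹), ?_, ?_⟩
    · simpa using h
    · simp
  · have hqa : q ∣ a := hrel.symm.dvd_of_dvd_mul_right ⟨-b, by linear_combination h⟩
    obtain ⟨e, rfl⟩ := hqa
    refine ⟨e, mul_comm .., mul_right_cancel₀ hq ?_⟩
    linear_combination h

variable {σ R : Type*} [CommRing R] [IsDomain R] [DecompositionMonoid (MvPolynomial σ R)]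
  {m n k : ℕ}

theorem exists_isHomogeneous_eq_mul_of_mul_add_mul_eq_zero
    {p q a b : MvPolynomial σ R} (hp : p.IsHomogeneous m) (hq : q.IsHomogeneous n)
    (ha : a.IsHomogeneous (k + n)) (hb : b.IsHomogeneous (k + m)) (hrel : IsRelPrime p q)
    (h : a * p + b * q = 0) :
    ∃ e : MvPolynomial σ R, e.IsHomogeneous k ∧ a = e * q ∧ b = -(e * p) := by
  obtain ⟨e, rfl, rfl⟩ := exists_eq_mul_of_mul_add_mul_eq_zero hrel h
  refine ⟨homogeneousComponent k e, homogeneousComponent_isHomogeneous k e, ?_, ?_⟩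
  · rw [← homogeneousComponent_mul_of_isHomogeneous_right e hq, homogeneousComponent_eq_self ha]
  · rw [← homogeneousComponent_mul_of_isHomogeneous_right e hp, ← map_neg,
      homogeneousComponent_eq_self hb]

variable {P Q : MvPolynomial σ R}

theorem exists_totalDegree_sub_mul_le (hP : P.totalDegree ≤ m) (hQ : Q.totalDegree ≤ n)
    (hrel : IsRelPrime (homogeneousComponent m P) (homogeneousComponent n Q))
    {A B : MvPolynomial σ R} (hA : A.totalDegree ≤ k + 1 + n) (hB : B.totalDegree ≤ k + 1 + m)
    (hAB : (A * P + B * Q).totalDegree ≤ k + m + n) :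
    ∃ E : MvPolynomial σ R, (A - E * Q).totalDegree ≤ k + n ∧ (B + E * P).totalDegree ≤ k + m := by
  have hsyz : homogeneousComponent (k + 1 + n) A * homogeneousComponent m P +
      homogeneousComponent (k + 1 + m) B * homogeneousComponent n Q = 0 := by
    rw [← homogeneousComponent_add_mul_of_totalDegree_le hA hP,
      ← homogeneousComponent_add_mul_of_totalDegree_le hB hQ, add_right_comm (k + 1) n m,
      ← map_add]
    exact homogeneousComponent_eq_zero _ _ (by lia)
  obtain ⟨e, he, heA, heB⟩ := exists_isHomogeneous_eq_mul_of_mul_add_mul_eq_zero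
    (homogeneousComponent_isHomogeneous m P) (homogeneousComponent_isHomogeneous n Q)
    (homogeneousComponent_isHomogeneous _ A) (homogeneousComponent_isHomogeneous _ B) hrel hsyz
  have heQ : (e * Q).totalDegree ≤ k + 1 + n :=
    (totalDegree_mul e Q).trans (add_le_add he.totalDegree_le hQ)
  have heP : (e * P).totalDegree ≤ k + 1 + m :=
    (totalDegree_mul e P).trans (add_le_add he.totalDegree_le hP)
  -- Subtracting the multiple `e * (Q, -P)` of the trivial syzygy cancels the top forms of `A`, `B`.
  refine ⟨e, ?_, ?_⟩
  · rw [add_right_comm] at hA heA heQ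
    refine totalDegree_le_of_homogeneousComponent_succ_eq_zero
      ((totalDegree_sub _ _).trans (max_le hA heQ)) ?_
    rw [map_sub, heA, add_right_comm, homogeneousComponent_add_mul_of_totalDegree_le
      he.totalDegree_le hQ, homogeneousComponent_eq_self he, sub_self]
  · rw [add_right_comm] at hB heB heP
    refine totalDegree_le_of_homogeneousComponent_succ_eq_zero
      ((totalDegree_add _ _).trans (max_le hB heP)) ?_
    rw [map_add, heB, add_right_comm, homogeneousComponent_add_mul_of_totalDegree_le
      he.totalDegree_le hP, homogeneousComponent_eq_self he, neg_add_cancel]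

theorem exists_totalDegree_le_of_mem_span_pair (hP : P.totalDegree ≤ m) (hQ : Q.totalDegree ≤ n)
    (hrel : IsRelPrime (homogeneousComponent m P) (homogeneousComponent n Q))
    {T : MvPolynomial σ R} (hT : T ∈ Ideal.span {P, Q}) (hdeg : T.totalDegree ≤ k + m + n) :
    ∃ A B : MvPolynomial σ R, A.totalDegree ≤ k + n ∧ B.totalDegree ≤ k + m ∧
      A * P + B * Q = T := by
  obtain ⟨A, B, rfl⟩ := Ideal.mem_span_pair.1 hT
  have lower : ∀ (j : ℕ) (A' B' : MvPolynomial σ R), A'.totalDegree ≤ k + j + n →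
      B'.totalDegree ≤ k + j + m → A' * P + B' * Q = A * P + B * Q →
      ∃ A₀ B₀ : MvPolynomial σ R, A₀.totalDegree ≤ k + n ∧ B₀.totalDegree ≤ k + m ∧
        A₀ * P + B₀ * Q = A * P + B * Q := by
    intro j
    induction j with
    | zero => exact fun A' B' hA hB h ↦ ⟨A', B', hA, hB, h⟩
    | succ j ih =>
      intro A' B' hA hB h
      obtain ⟨E, hAE, hBE⟩ := exists_totalDegree_sub_mul_le hP hQ hrel hA hB
        (by rw [h]; exact hdeg.trans (by lia))
      exact ih _ _ hAE hBE (by linear_combination h)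
  exact lower (A.totalDegree + B.totalDegree) A B (by lia) (by lia) rfl

theorem exists_totalDegree_le_eq_mul_of_mul_add_mul_eq_zero (hP : P.totalDegree ≤ m)
    (hQ : Q.totalDegree ≤ n)
    (hrel : IsRelPrime (homogeneousComponent m P) (homogeneousComponent n Q))
    {A B : MvPolynomial σ R} (hA : A.totalDegree ≤ k + n) (hB : B.totalDegree ≤ k + m)
    (h : A * P + B * Q = 0) :
    ∃ E : MvPolynomial σ R, E.totalDegree ≤ k ∧ A = E * Q ∧ B = -(E * P) := by
  obtain ⟨E, rfl, rfl⟩ := exists_eq_mul_of_mul_add_mul_eq_zero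
    (isRelPrime_of_isRelPrime_homogeneousComponent hP hQ hrel) h
  refine ⟨E, ?_, rfl, rfl⟩
  rcases hrel.ne_zero_or_ne_zero with hp | hq
  · exact totalDegree_le_of_totalDegree_mul_le hp (by rwa [totalDegree_neg] at hB)
  · exact totalDegree_le_of_totalDegree_mul_le hq hA

end Syzygies

section Dimension

theorem finrank_map_add_finrank_inf_ker {K M N : Type*} [DivisionRing K] [AddCommGroup M]
    [Module K M] [AddCommGroup N] [Module K N] (f : M →ₗ[K] N) (W : Submodule K M)
    [FiniteDimensional K W] :
    finrank K (W.map f) + finrank K ↥(W ⊓ LinearMap.ker f) = finrank K W := by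
  rw [← LinearMap.range_domRestrict, ← (f.domRestrict W).finrank_range_add_finrank_ker,
    LinearMap.ker_domRestrict, ← Submodule.map_comap_subtype, Submodule.finrank_map_subtype_eq]

theorem finrank_submodule_prod {K M N : Type*} [DivisionRing K] [AddCommGroup M]
    [Module K M] [AddCommGroup N] [Module K N] (V : Submodule K M) (W : Submodule K N)
    [FiniteDimensional K V] [FiniteDimensional K W] :
    finrank K (V.prod W) = finrank K V + finrank K W := by
  have hrange := LinearMap.finrank_range_of_inj (f := V.subtype.prodMap W.subtype)
    (V.subtype_injective.prodMap W.subtype_injective)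
  rwa [LinearMap.range_prodMap, V.range_subtype, W.range_subtype, finrank_prod] at hrange

theorem finrank_eq_of_iSup_eq_top {K M : Type*} [DivisionRing K] [AddCommGroup M]
    [Module K M] {W : ℕ → Submodule K M} [∀ k, FiniteDimensional K (W k)] {r : ℕ}
    (hW : Monotone W) (htop : ⨆ k, W k = ⊤) (hr : ∀ k, finrank K (W k) = r) :
    finrank K M = r := by
  have hconst : ∀ k, W k = W 0 := fun k ↦
    (Submodule.eq_of_le_of_finrank_eq (hW k.zero_le) ((hr 0).trans (hr k).symm)).symm
  rw [← finrank_top, ← htop, iSup_congr hconst, iSup_const, hr]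

theorem finrank_restrictTotalDegree (σ R : Type*) [Fintype σ] [CommRing R] [Nontrivial R] (N : ℕ) :
    finrank R (restrictTotalDegree σ R N) = (N + Fintype.card σ).choose (Fintype.card σ) := by
  classical
  have hexp : {d : σ →₀ ℕ | (d.sum fun _ e ↦ e) ≤ N} =
      ((Finset.range (N + 1)).biUnion Finset.univ.finsuppAntidiag : Finset (σ →₀ ℕ)) := by
    ext d
    simp [Finsupp.sum_fintype]
  have hdisj : ((Finset.range (N + 1) : Finset ℕ) : Set ℕ).PairwiseDisjoint
      (Finset.univ : Finset σ).finsuppAntidiag := by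
    intro i _ j _ hij
    refine Finset.disjoint_left.2 fun d hi hj ↦ hij ?_
    rw [← (Finset.mem_finsuppAntidiag.1 hi).1, (Finset.mem_finsuppAntidiag.1 hj).1]
  rw [restrictTotalDegree, finrank_eq_nat_card_basis (basisRestrictSupport R _), hexp,
    Nat.card_coe_set_eq, Set.ncard_coe_finset, Finset.card_biUnion hdisj]
  simp only [Finset.card_finsuppAntidiag_nat_eq_multichoose, Finset.card_univ,
    Nat.sum_range_multichoose]

-- The Euler characteristic of the Koszul complex in degree at most `k + m + n`, as
-- `(N + 2).choose 2` is the dimension of the space of plane polynomials of degree at most `N`.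
theorem choose_two_add_choose_two (m n k : ℕ) :
    (k + m + n + 2).choose 2 + (k + 2).choose 2 =
      (k + n + 2).choose 2 + (k + m + 2).choose 2 + m * n := by
  qify
  simp only [Nat.cast_choose_two]
  push_cast
  ring

section KoszulMap

variable {σ R : Type*} [CommSemiring R]

/-- The last differential `(A, B) ↦ A * P + B * Q` of the Koszul complex of `P` and `Q`. Its image
is the ideal generated by `P` and `Q`, and its kernel consists of their syzygies. -/
noncomputable def koszulMap (P Q : MvPolynomial σ R) :
    MvPolynomial σ R × MvPolynomial σ R →ₗ[R] MvPolynomial σ R :=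
  (LinearMap.mulRight R P).coprod (LinearMap.mulRight R Q)

theorem koszulMap_apply (P Q A B : MvPolynomial σ R) :
    koszulMap P Q (A, B) = A * P + B * Q :=
  rfl

end KoszulMap

variable {K σ : Type*} [Field K] {P Q : MvPolynomial σ K} {m n k : ℕ}

theorem finrank_prod_restrictTotalDegree_inf_ker_koszulMap (hP : P.totalDegree ≤ m)
    (hQ : Q.totalDegree ≤ n)
    (hrel : IsRelPrime (homogeneousComponent m P) (homogeneousComponent n Q)) (k : ℕ) :
    finrank K ↥((restrictTotalDegree σ K (k + n)).prod (restrictTotalDegree σ K (k + m)) ⊓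
      LinearMap.ker (koszulMap P Q)) = finrank K (restrictTotalDegree σ K k) := by
  let trivialSyzygy := (LinearMap.mulRight K Q).prod (-LinearMap.mulRight K P)
  have hinj : Function.Injective trivialSyzygy := by
    refine (injective_iff_map_eq_zero _).2 fun E hE ↦ ?_
    obtain ⟨hEQ, hEP⟩ : E * Q = 0 ∧ -(E * P) = 0 := Prod.ext_iff.1 hE
    rcases (isRelPrime_of_isRelPrime_homogeneousComponent hP hQ hrel).ne_zero_or_ne_zero with h | h
    · exact (mul_eq_zero_iff_right h).1 (neg_eq_zero.1 hEP)
    · exact (mul_eq_zero_iff_right h).1 hEQ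
  have hmap : (restrictTotalDegree σ K k).map trivialSyzygy =
      (restrictTotalDegree σ K (k + n)).prod (restrictTotalDegree σ K (k + m)) ⊓
        LinearMap.ker (koszulMap P Q) := by
    ext ⟨A, B⟩
    simp only [Submodule.mem_map, Submodule.mem_inf, Submodule.mem_prod, LinearMap.mem_ker,
      mem_restrictTotalDegree]
    constructor
    · rintro ⟨E, hE, h⟩
      obtain ⟨rfl, rfl⟩ : E * Q = A ∧ -(E * P) = B := Prod.ext_iff.1 h
      refine ⟨⟨(totalDegree_mul E Q).trans (add_le_add hE hQ), ?_⟩, ?_⟩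
      · rw [totalDegree_neg]
        exact (totalDegree_mul E P).trans (add_le_add hE hP)
      · rw [koszulMap_apply]
        ring
    · rintro ⟨⟨hA, hB⟩, h⟩
      obtain ⟨E, hE, rfl, rfl⟩ :=
        exists_totalDegree_le_eq_mul_of_mul_add_mul_eq_zero hP hQ hrel hA hB h
      exact ⟨E, hE, rfl⟩
  rw [← hmap]
  exact (Submodule.equivMapOfInjective trivialSyzygy hinj _).finrank_eq.symm

theorem map_koszulMap_prod_restrictTotalDegree (hP : P.totalDegree ≤ m) (hQ : Q.totalDegree ≤ n)
    (hrel : IsRelPrime (homogeneousComponent m P) (homogeneousComponent n Q)) (k : ℕ) :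
    ((restrictTotalDegree σ K (k + n)).prod (restrictTotalDegree σ K (k + m))).map
      (koszulMap P Q) =
    restrictTotalDegree σ K (k + m + n) ⊓ (Ideal.span {P, Q}).restrictScalars K := by
  ext T
  simp only [Submodule.mem_map, Submodule.mem_inf, Submodule.mem_prod,
    Submodule.restrictScalars_mem, mem_restrictTotalDegree]
  constructor
  · rintro ⟨⟨A, B⟩, ⟨hA, hB⟩, rfl⟩
    rw [koszulMap_apply]
    have hAP := totalDegree_mul A P
    have hBQ := totalDegree_mul B Q
    exact ⟨(totalDegree_add _ _).trans (max_le (by lia) (by lia)),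
      Ideal.mem_span_pair.2 ⟨A, B, rfl⟩⟩
  · rintro ⟨hT, hTI⟩
    obtain ⟨A, B, hA, hB, rfl⟩ := exists_totalDegree_le_of_mem_span_pair hP hQ hrel hTI hT
    exact ⟨(A, B), ⟨hA, hB⟩, rfl⟩

theorem finrank_map_restrictTotalDegree_quotient_span_pair {P Q : MvPolynomial (Fin 2) K}
    (hP : P.totalDegree ≤ m) (hQ : Q.totalDegree ≤ n)
    (hrel : IsRelPrime (homogeneousComponent m P) (homogeneousComponent n Q)) (k : ℕ) :
    finrank K ((restrictTotalDegree (Fin 2) K (k + m + n)).map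
      (Ideal.Quotient.mkₐ K (Ideal.span {P, Q})).toLinearMap) = m * n := by
  have hker : LinearMap.ker (Ideal.Quotient.mkₐ K (Ideal.span {P, Q})).toLinearMap =
      (Ideal.span {P, Q}).restrictScalars K := by
    ext T
    exact Ideal.Quotient.eq_zero_iff_mem
  have : FiniteDimensional K
      ((restrictTotalDegree (Fin 2) K (k + n)).prod (restrictTotalDegree (Fin 2) K (k + m))) :=
    Module.Finite.iff_fg.2 ((Module.Finite.iff_fg.1 inferInstance).prod
      (Module.Finite.iff_fg.1 inferInstance))
  have hquot := finrank_map_add_finrank_inf_ker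
    (Ideal.Quotient.mkₐ K (Ideal.span {P, Q})).toLinearMap
    (restrictTotalDegree (Fin 2) K (k + m + n))
  have hideal := finrank_map_add_finrank_inf_ker (koszulMap P Q)
    ((restrictTotalDegree (Fin 2) K (k + n)).prod (restrictTotalDegree (Fin 2) K (k + m)))
  rw [hker] at hquot
  rw [finrank_prod_restrictTotalDegree_inf_ker_koszulMap hP hQ hrel,
    map_koszulMap_prod_restrictTotalDegree hP hQ hrel] at hideal
  simp only [finrank_restrictTotalDegree, finrank_submodule_prod, Fintype.card_fin]
    at hquot hideal
  have hchoose := choose_two_add_choose_two m n k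
  lia

theorem finrank_quotient_span_pair {P Q : MvPolynomial (Fin 2) K}
    (hP : P.totalDegree ≤ m) (hQ : Q.totalDegree ≤ n)
    (hrel : IsRelPrime (homogeneousComponent m P) (homogeneousComponent n Q)) :
    finrank K (MvPolynomial (Fin 2) K ⧸ Ideal.span {P, Q}) = m * n := by
  refine finrank_eq_of_iSup_eq_top ?_ ?_
    (finrank_map_restrictTotalDegree_quotient_span_pair hP hQ hrel)
  · refine fun i j hij ↦ Submodule.map_mono fun T hT ↦ ?_
    rw [mem_restrictTotalDegree] at hT ⊢
    lia
  · refine eq_top_iff.2 fun t _ ↦ ?_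
    obtain ⟨T, rfl⟩ := Ideal.Quotient.mk_surjective t
    exact Submodule.mem_iSup_of_mem T.totalDegree
      (Submodule.mem_map_of_mem ((mem_restrictTotalDegree ..).2 (by lia)))

end Dimension

section Zeros

variable {σ K : Type*} [Field K]

theorem pointToPoint_injective : Function.Injective (pointToPoint (k := K) (K := K) (σ := σ)) := by
  intro x y hxy
  funext i
  have hmem : X i - C (x i) ∈ vanishingIdeal K {y} := by
    rw [← show vanishingIdeal K {x} = vanishingIdeal K {y} from congrArg PrimeSpectrum.asIdeal hxy,
      mem_vanishingIdeal_singleton_iff]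
    simp
  rw [mem_vanishingIdeal_singleton_iff] at hmem
  simpa [sub_eq_zero, eq_comm] using hmem

variable [IsAlgClosed K] [Finite σ]

theorem pointToPoint_image_zeroLocus (I : Ideal (MvPolynomial σ K))
    [IsArtinianRing (MvPolynomial σ K ⧸ I)] :
    pointToPoint '' zeroLocus K I = PrimeSpectrum.zeroLocus (I : Set (MvPolynomial σ K)) := by
  ext p
  constructor
  · rintro ⟨x, hx, rfl⟩
    exact fun f hf ↦ (mem_vanishingIdeal_singleton_iff x f).2 (hx f hf)
  · intro hp
    obtain ⟨q, hq⟩ := (Ideal.primeSpectrumQuotientOrderIsoZeroLocus I).surjective ⟨p, hp⟩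
    have hqp : q.asIdeal.comap (Ideal.Quotient.mk I) = p.asIdeal :=
      congrArg (PrimeSpectrum.asIdeal ∘ Subtype.val) hq
    have hmax : p.asIdeal.IsMaximal :=
      hqp ▸ Ideal.comap_isMaximal_of_surjective _ Ideal.Quotient.mk_surjective
    obtain ⟨x, hx⟩ := isMaximal_iff_eq_vanishingIdeal_singleton.1 hmax
    refine ⟨x, fun f hf ↦ ?_, PrimeSpectrum.ext hx.symm⟩
    rw [← mem_vanishingIdeal_singleton_iff, ← hx]
    exact hp hf

theorem ncard_zeroLocus_eq_finrank_quotient (I : Ideal (MvPolynomial σ K))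
    [Algebra.FormallyUnramified K (MvPolynomial σ K ⧸ I)] :
    (zeroLocus K I).ncard = finrank K (MvPolynomial σ K ⧸ I) := by
  have : Module.Finite K (MvPolynomial σ K ⧸ I) := Algebra.FormallyUnramified.finite_of_free K _
  have : IsArtinianRing (MvPolynomial σ K ⧸ I) := .of_finite K _
  have : Algebra.FormallyEtale K (MvPolynomial σ K ⧸ I) :=
    .of_formallyUnramified_of_field K _
  have := Fintype.ofFinite (PrimeSpectrum (MvPolynomial σ K ⧸ I))
  calc (zeroLocus K I).ncard
      = (PrimeSpectrum.zeroLocus (I : Set (MvPolynomial σ K))).ncard := by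
        rw [← pointToPoint_image_zeroLocus, Set.ncard_image_of_injective _ pointToPoint_injective]
    _ = Fintype.card (PrimeSpectrum (MvPolynomial σ K ⧸ I)) := by
        rw [← Nat.card_coe_set_eq, ← Nat.card_eq_fintype_card]
        exact (Nat.card_congr (Ideal.primeSpectrumQuotientOrderIsoZeroLocus I).toEquiv).symm
    _ = finrank K (MvPolynomial σ K ⧸ I) := by
        rw [(Algebra.FormallyEtale.equivPiOfIsSepClosed K _).toLinearEquiv.finrank_eq,
          Module.finrank_fintype_fun_eq_card]

theorem isUnit_mk_of_forall_eval_ne_zero {I : Ideal (MvPolynomial σ K)} {f : MvPolynomial σ K}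
    (h : ∀ x ∈ zeroLocus K I, eval x f ≠ 0) : IsUnit (Ideal.Quotient.mk I f) := by
  by_contra hf
  obtain ⟨M, hM, hfM⟩ := exists_max_ideal_of_mem_nonunits hf
  have hmax : (M.comap (Ideal.Quotient.mk I)).IsMaximal :=
    Ideal.comap_isMaximal_of_surjective _ Ideal.Quotient.mk_surjective
  obtain ⟨x, hx⟩ := isMaximal_iff_eq_vanishingIdeal_singleton.1 hmax
  refine h x (fun g hg ↦ ?_) ?_
  · rw [← mem_vanishingIdeal_singleton_iff, ← hx, Ideal.mem_comap,
      Ideal.Quotient.eq_zero_iff_mem.2 hg]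
    exact M.zero_mem
  · rw [← coe_aeval_eq_eval]
    exact (mem_vanishingIdeal_singleton_iff x f).1 (hx ▸ hfM)

theorem etale_quotient_span_range {P : σ → MvPolynomial σ K}
    (h : ∀ x, (∀ j, eval x (P j) = 0) →
      LinearIndependent K fun j i ↦ eval x (pderiv i (P j))) :
    Algebra.Etale K (MvPolynomial σ K ⧸ Ideal.span (Set.range P)) := by
  classical
  have := Fintype.ofFinite σ
  let presentation := Algebra.PreSubmersivePresentation.naive (v := P) (id : σ → σ)
    Function.injective_id
  have hdet : IsUnit (Ideal.Quotient.mk (Ideal.span (Set.range P))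
      presentation.jacobiMatrix.det) := by
    refine isUnit_mk_of_forall_eval_ne_zero fun x hx ↦ ?_
    rw [zeroLocus_span] at hx
    have hrows := h x fun j ↦ hx _ (Set.mem_range_self j)
    rw [RingHom.map_det]
    refine ((Matrix.isUnit_iff_isUnit_det _).1
      (Matrix.linearIndependent_cols_iff_isUnit.1 ?_)).ne_zero
    convert hrows using 3 with j i
    simp [presentation]
  let submersive : Algebra.SubmersivePresentation K
      (MvPolynomial σ K ⧸ Ideal.span (Set.range P)) σ σ :=
    { presentation with
      jacobian_isUnit := by
        rw [presentation.jacobian_eq_jacobiMatrix_det]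
        exact hdet }
  have : Algebra.IsStandardSmoothOfRelativeDimension 0 K
      (MvPolynomial σ K ⧸ Ideal.span (Set.range P)) :=
    submersive.isStandardSmoothOfRelativeDimension (by simp [Algebra.Presentation.dimension])
  infer_instance

theorem exists_X_pow_mem_of_zeroLocus_subset {I : Ideal (MvPolynomial σ K)}
    (h : zeroLocus K I ⊆ {0}) (i : σ) : ∃ r : ℕ, X i ^ r ∈ I := by
  rw [← Ideal.mem_radical_iff, ← vanishingIdeal_zeroLocus_eq_radical (K := K),
    mem_vanishingIdeal_iff]
  intro x hx
  simp [show x = 0 from h hx]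

theorem isRelPrime_of_forall_common_zero_eq_zero [Nontrivial σ] {p q : MvPolynomial σ K}
    (h : ∀ x : σ → K, eval x p = 0 → eval x q = 0 → x = 0) : IsRelPrime p q := by
  intro d hdp hdq
  have hspan : Ideal.span {p, q} ≤ Ideal.span {d} :=
    Ideal.span_le.2 (Set.pair_subset_iff.2
      ⟨Ideal.mem_span_singleton.2 hdp, Ideal.mem_span_singleton.2 hdq⟩)
  have hzero : zeroLocus K (Ideal.span {p, q}) ⊆ {0} := by
    rw [zeroLocus_span]
    exact fun x hx ↦ h x (hx p (by simp)) (hx q (by simp))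
  obtain ⟨i, j, hij⟩ := exists_pair_ne σ
  obtain ⟨r, hr⟩ := exists_X_pow_mem_of_zeroLocus_subset hzero i
  obtain ⟨s, hs⟩ := exists_X_pow_mem_of_zeroLocus_subset hzero j
  have hX : IsRelPrime (X i : MvPolynomial σ K) (X j) :=
    X_prime.irreducible.isRelPrime_iff_not_dvd.2 (by simpa [X_dvd_X] using hij)
  exact hX.pow (Ideal.mem_span_singleton.1 (hspan hr)) (Ideal.mem_span_singleton.1 (hspan hs))

theorem ncard_common_zeros_eq_mul {P Q : MvPolynomial (Fin 2) K} {m n : ℕ}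
    (hP : P.totalDegree ≤ m) (hQ : Q.totalDegree ≤ n)
    (hinf : ∀ v : Fin 2 → K, v ≠ 0 →
      ¬ (eval v (homogeneousComponent m P) = 0 ∧ eval v (homogeneousComponent n Q) = 0))
    (htrans : ∀ x : Fin 2 → K, eval x P = 0 → eval x Q = 0 →
      LinearIndependent K ![fun i ↦ eval x (pderiv i P), fun i ↦ eval x (pderiv i Q)]) :
    {x : Fin 2 → K | eval x P = 0 ∧ eval x Q = 0}.ncard = m * n := by
  have hrange : Set.range ![P, Q] = {P, Q} := Matrix.range_cons_cons_empty P Q ![]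
  have hetale : Algebra.Etale K (MvPolynomial (Fin 2) K ⧸ Ideal.span {P, Q}) := by
    rw [← hrange]
    refine etale_quotient_span_range fun x hx ↦ ?_
    convert htrans x (hx 0) (hx 1) using 1
    ext j i
    fin_cases j <;> rfl
  calc {x : Fin 2 → K | eval x P = 0 ∧ eval x Q = 0}.ncard
      = (zeroLocus K (Ideal.span {P, Q})).ncard := by
        rw [zeroLocus_span]
        simp
    _ = finrank K (MvPolynomial (Fin 2) K ⧸ Ideal.span {P, Q}) :=
        ncard_zeroLocus_eq_finrank_quotient _
    _ = m * n := finrank_quotient_span_pair hP hQ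
        (isRelPrime_of_forall_common_zero_eq_zero fun v hPv hQv ↦
          by_contra fun hv ↦ hinf v hv ⟨hPv, hQv⟩)

end Zeros

theorem degree_of_discriminant_general {K : Type*} [Field K] [IsAlgClosed K] {d n : ℕ}
    {f g : MvPolynomial (Fin 2) K} (hf : f.totalDegree ≤ d) (hg : g.totalDegree ≤ d)
    {Q : MvPolynomial (Fin 2) K} (hQ : Q.totalDegree ≤ n)
    {C : Set (Fin 2 → K)} (hC : C = {q | eval q Q = 0})
    {F : (Fin 2 → K) → (Fin 2 → K)} (hF : ∀ q, F q = ![eval q f, eval q g]) {a b c : K}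
    {P : MvPolynomial (Fin 2) K}
    (hP : P = MvPolynomial.C a * f + MvPolynomial.C b * g + MvPolynomial.C c)
    (hinf : ∀ v : Fin 2 → K, v ≠ 0 →
      ¬ (eval v (homogeneousComponent d P) = 0 ∧ eval v (homogeneousComponent n Q) = 0))
    (htrans : ∀ q : Fin 2 → K, eval q P = 0 → eval q Q = 0 →
      LinearIndependent K ![fun i ↦ eval q (pderiv i P), fun i ↦ eval q (pderiv i Q)])
    (hinj : Set.InjOn F (C ∩ {q | eval q P = 0})) :
    (F '' C ∩ {w : Fin 2 → K | a * w 0 + b * w 1 + c = 0}).ncard = d * n := by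
  have hPdeg : P.totalDegree ≤ d := by
    rw [hP]
    refine (totalDegree_add _ _).trans (max_le ((totalDegree_add _ _).trans (max_le ?_ ?_)) ?_)
    · rw [← smul_eq_C_mul]
      exact (totalDegree_smul_le a f).trans hf
    · rw [← smul_eq_C_mul]
      exact (totalDegree_smul_le b g).trans hg
    · simp
  have hpreimage : F ⁻¹' {w | a * w 0 + b * w 1 + c = 0} = {q | eval q P = 0} := by
    ext q
    simp [hF, hP]
  have hcommon : C ∩ {q | eval q P = 0} = {q | eval q P = 0 ∧ eval q Q = 0} := by
    rw [hC, Set.inter_comm]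
    rfl
  rw [← Set.image_inter_preimage, hpreimage, hinj.ncard_image, hcommon]
  exact ncard_common_zeros_eq_mul hPdeg hQ hinf htrans

/-- Degree of the discriminant: if the critical curve `C(F) = {J = 0}` has degree
`d₁ + d₂ - 2`, `F` is generically injective on `C(F)`, and a generic line
`L = {ax + by + c = 0}` pulls back to the curve `{af + bg + c = 0}` (of degree
`d₁`) having no common points at infinity with `C(F)` and meeting it
transversally, with `F` injective on the intersection, then
`deg Δ(F) = #(L ∩ Δ(F)) = d₁(d₁ + d₂ - 2)`. -/
theorem degree_of_discriminant (d1 d2 : ℕ) (h21 : 1 ≤ d2) (hle : d2 ≤ d1)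
    (f g : MvPolynomial (Fin 2) ℂ)
    (hf : f.totalDegree = d1) (hg : g.totalDegree = d2)
    (J : MvPolynomial (Fin 2) ℂ)
    (hJ : J = pderiv 0 f * pderiv 1 g - pderiv 1 f * pderiv 0 g)
    (hdegJ : J.totalDegree = d1 + d2 - 2)
    (C : Set (Fin 2 → ℂ)) (hC : C = {q | eval q J = 0})
    (F : (Fin 2 → ℂ) → (Fin 2 → ℂ)) (hF : ∀ q, F q = ![eval q f, eval q g])
    -- F restricted to C(F) is generically injective:
    (hgeninj : ∃ T : Set (Fin 2 → ℂ), T.Finite ∧ Set.InjOn F (C \ T))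
    (a b c : ℂ) (hab : (a, b) ≠ (0, 0))
    (P : MvPolynomial (Fin 2) ℂ) (hP : P = MvPolynomial.C a * f + MvPolynomial.C b * g + MvPolynomial.C c)
    -- {af + bg + c = 0} and C(F) have no common points at infinity:
    (hinf : ∀ v : Fin 2 → ℂ, v ≠ 0 →
      ¬ (eval v (homogeneousComponent d1 P) = 0 ∧
         eval v (homogeneousComponent (d1 + d2 - 2) J) = 0))
    -- {af + bg + c = 0} meets C(F) transversally:
    (htrans : ∀ q : Fin 2 → ℂ, eval q P = 0 → eval q J = 0 →
      LinearIndependent ℂ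
        ![(fun i => eval q (pderiv i P) : Fin 2 → ℂ),
          (fun i => eval q (pderiv i J) : Fin 2 → ℂ)])
    -- the intersection points map bijectively onto L ∩ Δ(F):
    (hinj : Set.InjOn F (C ∩ {q | eval q P = 0})) :
    Set.ncard (F '' C ∩ {w : Fin 2 → ℂ | a * w 0 + b * w 1 + c = 0}) =
      d1 * (d1 + d2 - 2) :=
  degree_of_discriminant_general hf.le (hg.le.trans hle) hdegJ.le hC hF hP hinf htrans hinj
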